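/- Let (X,T) be a zero dimensional dynamical system, W ⊆ X a closed set, and let (Pₙ)_{n≥0} and (Qₙ)_{n≥0} be two systems of Kakutani–Rokhlin partitions for (X,T,W), with tops Zₙ and Wₙ respectively, such that ⋂_{n≥0} Zₙ = W = ⋂_{n≥0} Wₙ. Then there exists a strictly increasing sequence of indices n₁ < n₂ < n₃ < ⋯ such that Q_{n₂} refines P_{n₁}, P_{n₃} refines Q_{n₂}, Q_{n₄} refines P_{n₃}, and so on alternately, and the corresponding tops are nested: Z_{n₁} ⊇ W_{n₂} ⊇ Z_{n₃} ⊇ W_{n₄} ⊇ ⋯ (here a partition R refines a partition R' if every element of R is contained in some element of R'). -/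

import Mathlib

/-- A Kakutani–Rokhlin partition for `(X,T)`: a finite family
`{Z(k,j) : 1 ≤ k ≤ K, 1 ≤ j ≤ J(k)}` of pairwise disjoint clopen sets covering `X`, with
`T(Z(k,j)) = Z(k,j+1)` for `1 ≤ j < J(k)` and `T` mapping the top onto the base. -/
structure KRPartition (X : Type*) [TopologicalSpace X] (T : X ≃ₜ X) where
  K : ℕ
  K_pos : 1 ≤ K
  J : ℕ → ℕ
  J_pos : ∀ k ∈ Set.Icc 1 K, 1 ≤ J k
  Z : ℕ → ℕ → Set X
  clopen : ∀ k ∈ Set.Icc 1 K, ∀ j ∈ Set.Icc 1 (J k), IsClopen (Z k j)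
  disj : ∀ k ∈ Set.Icc 1 K, ∀ j ∈ Set.Icc 1 (J k), ∀ k' ∈ Set.Icc 1 K,
    ∀ j' ∈ Set.Icc 1 (J k'), (k, j) ≠ (k', j') → Disjoint (Z k j) (Z k' j')
  cover : (⋃ k ∈ Set.Icc 1 K, ⋃ j ∈ Set.Icc 1 (J k), Z k j) = Set.univ
  tower : ∀ k ∈ Set.Icc 1 K, ∀ j, 1 ≤ j → j < J k → ⇑T '' Z k j = Z k (j + 1)
  top_to_base : ⇑T '' (⋃ k ∈ Set.Icc 1 K, Z k (J k)) = ⋃ k ∈ Set.Icc 1 K, Z k 1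

/-- The top `⋃_{k=1}^{K} Z(k,J(k))` of a K-R partition. -/
def KRPartition.top {X : Type*} [TopologicalSpace X] {T : X ≃ₜ X}
    (P : KRPartition X T) : Set X :=
  ⋃ k ∈ Set.Icc 1 P.K, P.Z k (P.J k)

/-- The collection of elements (clopen pieces) of a K-R partition. -/
def KRPartition.parts {X : Type*} [TopologicalSpace X] {T : X ≃ₜ X}
    (P : KRPartition X T) : Set (Set X) :=
  {S | ∃ k ∈ Set.Icc 1 P.K, ∃ j ∈ Set.Icc 1 (P.J k), S = P.Z k j}

/-- A system of K-R partitions for `(X,T,W)`: a sequence of K-R partitions, each with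
`W` contained in its top, each refining the previous one, with decreasing tops, and whose
union of elements is a basis for the topology of `X`. -/
structure KRSystem (X : Type*) [TopologicalSpace X] (T : X ≃ₜ X) (W : Set X) where
  P : ℕ → KRPartition X T
  W_subset_top : ∀ n, W ⊆ (P n).top
  refines : ∀ n, ∀ S ∈ (P (n + 1)).parts, ∃ S' ∈ (P n).parts, S ⊆ S'
  top_mono : ∀ n, (P (n + 1)).top ⊆ (P n).top
  isBasis : TopologicalSpace.IsTopologicalBasis (⋃ n, (P n).parts)

/-!
Let `Y = ⋂ Zₙ = ⋂ Wₙ`. The clopen top `Zₙ` is a neighbourhood of `Y`, so by compactness it contains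
the decreasing tops `Wₘ` for all large `m`. For refinement, each point lies in some element `V` of
some `Qₖ` that is contained in an element of `Pₙ`; when `m ≥ k`, the element of `Qₘ` through any
point of `V` lies in an element of `Qₖ` meeting `V`, that is, in `V`. Compactness makes the choice
of `k` uniform, so `Qₘ` refines `Pₙ` for all large `m`. The situation is symmetric in `P` and `Q`,
and the indices can be chosen one after the other. That `𝒜` refines `ℬ` is
written `IsCofinalFor 𝒜 ℬ`.
-/

open Filter Set Topology TopologicalSpace

theorem eventually_isCofinalFor_of_isTopologicalBasis {X ι : Type*} [TopologicalSpace X]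
    [CompactSpace X] [Preorder ι] {𝒜 : ι → Set (Set X)} {𝓤 : Set (Set X)}
    (hdisj : ∀ i, (𝒜 i).PairwiseDisjoint id) (hrefine : ∀ i j, i ≤ j → IsCofinalFor (𝒜 j) (𝒜 i))
    (hbasis : IsTopologicalBasis (⋃ i, 𝒜 i)) (hopen : ∀ U ∈ 𝓤, IsOpen U)
    (hcover : ⋃₀ 𝓤 = univ) (hne : 𝓤.Nonempty) :
    ∀ᶠ j in atTop, IsCofinalFor (𝒜 j) 𝓤 := by
  have hlocal (x : X) : ∀ᶠ p : ι × X in atTop ×ˢ 𝓝 x, ∀ S ∈ 𝒜 p.1, p.2 ∈ S → ∃ U ∈ 𝓤, S ⊆ U := by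
    obtain ⟨U, hU, hxU⟩ := mem_sUnion.1 (hcover ▸ mem_univ x)
    obtain ⟨V, hV, hxV, hVU⟩ := hbasis.exists_subset_of_mem_open hxU (hopen U hU)
    obtain ⟨i, hVi⟩ := mem_iUnion.1 hV
    filter_upwards [prod_mem_prod (Ici_mem_atTop i) ((hbasis.isOpen hV).mem_nhds hxV)]
    rintro ⟨j, y⟩ ⟨hij, hyV⟩ S hS hyS
    obtain ⟨S', hS', hSS'⟩ := hrefine i j hij hS
    have hS'V : S' = V := (hdisj i).elim_set hS' hVi y (hSS' hyS) hyV
    exact ⟨U, hU, hSS'.trans (hS'V.trans_subset hVU)⟩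
  have hglobal : ∀ᶠ j in atTop, ∀ y, ∀ S ∈ 𝒜 j, y ∈ S → ∃ U ∈ 𝓤, S ⊆ U := by
    have h := isCompact_univ.mem_prod_nhdsSet_of_forall fun x _ => hlocal x
    rwa [nhdsSet_univ, mem_prod_top] at h
  filter_upwards [hglobal] with j hj S hS
  obtain rfl | ⟨y, hyS⟩ := S.eq_empty_or_nonempty
  · exact hne.imp fun U hU => ⟨hU, empty_subset U⟩
  · exact hj y S hS hyS

theorem eventually_subset_of_antitone_of_iInter_subset {X ι : Type*} [TopologicalSpace X]
    [CompactSpace X] [Preorder ι] [IsDirectedOrder ι] [Nonempty ι] {C : ι → Set X} {U : Set X}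
    (hC : Antitone C) (hclosed : ∀ i, IsClosed (C i)) (hU : IsOpen U) (hCU : ⋂ i, C i ⊆ U) :
    ∀ᶠ i in atTop, C i ⊆ U := by
  obtain ⟨i, hi⟩ := exists_subset_nhds_of_compactSpace hC.directed_ge hclosed
    fun x hx => hU.mem_nhds (hCU hx)
  filter_upwards [eventually_ge_atTop i] with j hij
  exact (hC hij).trans hi

namespace KRPartition

variable {X : Type*} [TopologicalSpace X] {T : X ≃ₜ X} (P : KRPartition X T)

theorem isClopen_of_mem_parts {S : Set X} (hS : S ∈ P.parts) : IsClopen S := by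
  obtain ⟨k, hk, j, hj, rfl⟩ := hS
  exact P.clopen k hk j hj

theorem isClopen_top : IsClopen P.top :=
  (finite_Icc 1 P.K).isClopen_biUnion fun k hk => P.clopen k hk _ ⟨P.J_pos k hk, le_rfl⟩

theorem sUnion_parts : ⋃₀ P.parts = univ := by
  refine eq_univ_of_univ_subset (P.cover.symm.trans_subset ?_)
  exact iUnion₂_subset fun k hk => iUnion₂_subset fun j hj =>
    subset_sUnion_of_mem ⟨k, hk, j, hj, rfl⟩

theorem parts_nonempty : P.parts.Nonempty :=
  have h1 : 1 ∈ Icc 1 P.K := ⟨le_rfl, P.K_pos⟩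
  ⟨P.Z 1 1, 1, h1, 1, ⟨le_rfl, P.J_pos 1 h1⟩, rfl⟩

theorem pairwiseDisjoint_parts : P.parts.PairwiseDisjoint id := by
  rintro _ ⟨k, hk, j, hj, rfl⟩ _ ⟨k', hk', j', hj', rfl⟩ hne
  refine P.disj k hk j hj k' hk' j' hj' fun h => hne ?_
  obtain ⟨rfl, rfl⟩ := Prod.mk.inj h
  rfl

end KRPartition

namespace KRSystem

variable {X : Type*} [TopologicalSpace X] {T T' : X ≃ₜ X} {W W' : Set X}

theorem antitone_top (Q : KRSystem X T W) : Antitone fun n => (Q.P n).top :=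
  antitone_nat_of_succ_le Q.top_mono

theorem isCofinalFor_parts (Q : KRSystem X T W) (n m : ℕ) (hnm : n ≤ m) :
    IsCofinalFor (Q.P m).parts (Q.P n).parts := by
  induction m, hnm using Nat.le_induction with
  | base => exact .rfl
  | succ m _ ih => exact IsCofinalFor.trans (Q.refines m) ih

theorem eventually_isCofinalFor_parts [CompactSpace X] (Q : KRSystem X T W)
    (R : KRPartition X T') : ∀ᶠ m in atTop, IsCofinalFor (Q.P m).parts R.parts :=
  eventually_isCofinalFor_of_isTopologicalBasis (fun n => (Q.P n).pairwiseDisjoint_parts)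
    Q.isCofinalFor_parts Q.isBasis (fun _ hS => (R.isClopen_of_mem_parts hS).isOpen)
    R.sUnion_parts R.parts_nonempty

theorem eventually_top_subset [CompactSpace X] (Q : KRSystem X T W) (R : KRPartition X T')
    (hR : ⋂ n, (Q.P n).top ⊆ R.top) : ∀ᶠ m in atTop, (Q.P m).top ⊆ R.top :=
  eventually_subset_of_antitone_of_iInter_subset Q.antitone_top
    (fun n => (Q.P n).isClopen_top.isClosed) R.isClopen_top.isOpen hR

theorem eventually_isCofinalFor_parts_and_top_subset [CompactSpace X] (P : KRSystem X T W)
    (Q : KRSystem X T' W') (htop : ⋂ n, (Q.P n).top ⊆ ⋂ n, (P.P n).top) (n : ℕ) :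
    ∀ᶠ m in atTop, IsCofinalFor (Q.P m).parts (P.P n).parts ∧ (Q.P m).top ⊆ (P.P n).top :=
  (Q.eventually_isCofinalFor_parts (P.P n)).and
    (Q.eventually_top_subset (P.P n) (htop.trans (iInter_subset _ n)))

end KRSystem

theorem stmt7_general {X : Type*} [TopologicalSpace X] [CompactSpace X] {T T' : X ≃ₜ X}
    {W W' : Set X} (P : KRSystem X T W) (Q : KRSystem X T' W')
    (htop : ⋂ n, (P.P n).top = ⋂ n, (Q.P n).top) :
    ∃ n : ℕ → ℕ, StrictMono n ∧ ∀ i j, i < j →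
      (IsCofinalFor (Q.P (n j)).parts (P.P (n i)).parts ∧
        (Q.P (n j)).top ⊆ (P.P (n i)).top) ∧
      (IsCofinalFor (P.P (n j)).parts (Q.P (n i)).parts ∧
        (P.P (n j)).top ⊆ (Q.P (n i)).top) := by
  have hPQ := P.eventually_isCofinalFor_parts_and_top_subset Q htop.ge
  have hQP := Q.eventually_isCofinalFor_parts_and_top_subset P htop.le
  obtain ⟨n, hn, h, -⟩ :=
    hasAntitoneBasis_atTop.subbasis_with_rel fun k => (hPQ k).and (hQP k)
  exact ⟨n, hn, h⟩

/-- Given two systems of K-R partitions `(Pₙ)` and `(Qₙ)` for `(X,T,W)` whose tops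
intersect exactly in `W`, there is a strictly increasing sequence of indices
`n₁ < n₂ < n₃ < ⋯` such that, alternately, `Q_{n_{i+1}}` refines `P_{n_i}` (for odd `i`)
and `P_{n_{i+1}}` refines `Q_{n_i}` (for even `i`), with correspondingly nested tops
`Z_{n₁} ⊇ W_{n₂} ⊇ Z_{n₃} ⊇ W_{n₄} ⊇ ⋯`. -/
theorem stmt7 {X : Type*} [TopologicalSpace X] [CompactSpace X]
    [TopologicalSpace.MetrizableSpace X] [TotallyDisconnectedSpace X] [Nonempty X]
    (T : X ≃ₜ X) (W : Set X) (hWcl : IsClosed W)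
    (P Q : KRSystem X T W)
    (hPtop : (⋂ n, (P.P n).top) = W) (hQtop : (⋂ n, (Q.P n).top) = W) :
    ∃ n : ℕ → ℕ, StrictMono n ∧
      (∀ i, 1 ≤ i → Odd i →
        (∀ S ∈ (Q.P (n (i + 1))).parts, ∃ S' ∈ (P.P (n i)).parts, S ⊆ S') ∧
        (Q.P (n (i + 1))).top ⊆ (P.P (n i)).top) ∧
      (∀ i, 1 ≤ i → Even i →
        (∀ S ∈ (P.P (n (i + 1))).parts, ∃ S' ∈ (Q.P (n i)).parts, S ⊆ S') ∧
        (P.P (n (i + 1))).top ⊆ (Q.P (n i)).top) := by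
  obtain ⟨n, hn, h⟩ := stmt7_general P Q (hPtop.trans hQtop.symm)
  exact ⟨n, hn, fun i _ _ => (h i _ i.lt_succ_self).1, fun i _ _ => (h i _ i.lt_succ_self).2⟩
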